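/- arXiv:1806.06709 — 7 statements merged into one kernel-verified Lean document; each statement's English description precedes it below -/
import Mathlib

section
/- For every positive integer n, the equality ∑_{d ∣ n} d·φ(d)·φ(n/d) = 12 · ∑_{d ∣ n} φ(d)·φ(n/d) holds if and only if n ∈ {23, 32, 33, 35, 40, 42}. -/
/-!
Write `w d = φ(d) φ(n/d)`, a positive weight on the divisors of `n` that is invariant under the
involution `d ↦ n / d`. Averaging the left-hand sum with its image under this involution gives
`2 ∑ d w(d) = ∑ (d + n / d) w(d)`, and by AM-GM `d + n / d ≥ 2 √n`. Hence the left-hand sum is at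
least `√n` times `∑ w(d)`, so equality with the factor `12` forces `n ≤ 144`. This is
`sum_lt_of_lt`; the remaining `n` form a finite computation.
-/

/-- Symmetrization of the weighted divisor sum under the involution `d ↦ n / d`. -/
lemma two_mul_sum_eq (n : ℕ) :
    2 * ∑ d ∈ n.divisors, d * d.totient * (n / d).totient =
      ∑ d ∈ n.divisors, (d + n / d) * (d.totient * (n / d).totient) := by
  have h : ∑ d ∈ n.divisors, d * d.totient * (n / d).totient =
      ∑ d ∈ n.divisors, (n / d) * (d.totient * (n / d).totient) := by
    rw [← Nat.sum_div_divisors n fun d => d * d.totient * (n / d).totient]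
    refine Finset.sum_congr rfl fun d hd => ?_
    obtain ⟨hd, hn⟩ := Nat.mem_divisors.mp hd
    rw [Nat.div_div_self hd hn]
    ring
  rw [two_mul]
  nth_rewrite 2 [h]
  rw [← Finset.sum_add_distrib]
  refine Finset.sum_congr rfl fun d _ => ?_
  ring

lemma sum_lt_of_lt {n : ℕ} (hn : 144 < n) :
    12 * ∑ d ∈ n.divisors, d.totient * (n / d).totient <
      ∑ d ∈ n.divisors, d * d.totient * (n / d).totient := by
  have key : ∑ d ∈ n.divisors, 24 * (d.totient * (n / d).totient) <
      ∑ d ∈ n.divisors, (d + n / d) * (d.totient * (n / d).totient) := by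
    refine Finset.sum_lt_sum_of_nonempty (Nat.nonempty_divisors.mpr (by omega)) fun d hd => ?_
    have hdvd := Nat.dvd_of_mem_divisors hd
    have hd0 : 0 < d := Nat.pos_of_mem_divisors hd
    have he0 : 0 < n / d := Nat.div_pos (Nat.le_of_dvd (by omega) hdvd) hd0
    have hmul : d * (n / d) = n := Nat.mul_div_cancel' hdvd
    have hw : 0 < d.totient * (n / d).totient :=
      Nat.mul_pos (Nat.totient_pos.mpr hd0) (Nat.totient_pos.mpr he0)
    refine Nat.mul_lt_mul_of_pos_right ?_ hw
    generalize n / d = e at hmul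
    -- AM-GM: `(d + e) ^ 2 ≥ 4 * d * e = 4 * n > 24 ^ 2`
    zify at *
    nlinarith [sq_nonneg ((d : ℤ) - e)]
  rw [← two_mul_sum_eq, ← Finset.mul_sum] at key
  omega

theorem divisor_totient_sum_eq_twelve_mul_iff (n : ℕ) (hn : 0 < n) :
    (∑ d ∈ n.divisors, d * d.totient * (n / d).totient) =
        12 * ∑ d ∈ n.divisors, d.totient * (n / d).totient ↔
      n ∈ ({23, 32, 33, 35, 40, 42} : Finset ℕ) := by
  rcases Nat.lt_or_ge 144 n with h | h
  · refine iff_of_false (sum_lt_of_lt h).ne' fun hmem => ?_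
    simp only [Finset.mem_insert, Finset.mem_singleton] at hmem
    omega
  · have small : ∀ m < 145, 0 < m →
        ((∑ d ∈ m.divisors, d * d.totient * (m / d).totient) =
            12 * ∑ d ∈ m.divisors, d.totient * (m / d).totient ↔
          m ∈ ({23, 32, 33, 35, 40, 42} : Finset ℕ)) := by
      decide +kernel
    exact small n (by omega) hn
end

section
/- For every natural number n > 144, the strict inequality ∑_{d ∣ n} d·φ(d)·φ(n/d) > 12 · ∑_{d ∣ n} φ(d)·φ(n/d) holds. -/
/-- For every natural number `n > 144`, the strict inequality
`∑_{d ∣ n} d·φ(d)·φ(n/d) > 12 · ∑_{d ∣ n} φ(d)·φ(n/d)` holds. -/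
theorem divisor_totient_sum_gt_twelve_mul (n : ℕ) (hn : 144 < n) :
    (∑ d ∈ n.divisors, d * d.totient * (n / d).totient) >
      12 * ∑ d ∈ n.divisors, d.totient * (n / d).totient := by
  -- Averaging with the reindexing `d ↦ n / d` turns the weight `d` into `(d + n / d) / 2`,
  -- which exceeds `12` by AM-GM since `d * (n / d) = n > 12 ^ 2`.
  have hn0 : n ≠ 0 := by omega
  have hsymm : ∑ d ∈ n.divisors, d * d.totient * (n / d).totient =
      ∑ d ∈ n.divisors, (n / d) * d.totient * (n / d).totient := by
    rw [← Nat.sum_div_divisors n (fun d => d * d.totient * (n / d).totient)]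
    refine Finset.sum_congr rfl fun d hd => ?_
    rw [Nat.div_div_self (Nat.dvd_of_mem_divisors hd) hn0]
    ring
  have hlt : ∑ d ∈ n.divisors, 24 * (d.totient * (n / d).totient) <
      ∑ d ∈ n.divisors, (d * d.totient * (n / d).totient +
        (n / d) * d.totient * (n / d).totient) := by
    refine Finset.sum_lt_sum_of_nonempty ⟨1, Nat.one_mem_divisors.mpr hn0⟩ fun d hd => ?_
    have hmul : d * (n / d) = n := Nat.mul_div_cancel' (Nat.dvd_of_mem_divisors hd)
    generalize n / d = e at hmul ⊢
    have hd0 : 0 < d := Nat.pos_of_ne_zero (by rintro rfl; simp at hmul; omega)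
    have he0 : 0 < e := Nat.pos_of_ne_zero (by rintro rfl; simp at hmul; omega)
    have hsum : 24 < d + e := by
      by_contra! h
      zify at h hmul hn
      nlinarith [sq_nonneg ((d : ℤ) - e)]
    have hpos : 0 < d.totient * e.totient :=
      Nat.mul_pos (Nat.totient_pos.mpr hd0) (Nat.totient_pos.mpr he0)
    calc 24 * (d.totient * e.totient) < (d + e) * (d.totient * e.totient) :=
          Nat.mul_lt_mul_of_pos_right hsum hpos
      _ = _ := by ring
  rw [Finset.sum_add_distrib, ← hsymm, ← Finset.mul_sum] at hlt
  omega
end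

section
/- For every positive integer n, the identity ∑_{d ∣ n} d·φ(d)·φ(n/d) = n² · ∏_{p ∣ n, p prime} (1 − 1/p²) holds in the rational numbers, where the product ranges over the distinct prime divisors of n. -/
/-!
The sum is the Dirichlet convolution of the multiplicative functions `d ↦ d·φ(d)` and `φ`, hence
multiplicative in `n`, and so is the right-hand side. It therefore suffices to treat prime powers
(`convolution_prime_pow`): there the sum over the intermediate exponents is geometric, and the
total is `p ^ (2k) · (p - 1)(p + 1)` at `n = p ^ (k + 1)`.
-/

/-- Euler's totient as an arithmetic function. -/
def totientArith : ArithmeticFunction ℕ := ⟨Nat.totient, Nat.totient_zero⟩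

/-- The Dirichlet convolution of `d ↦ d·φ(d)` with `φ`. -/
def totientConvolution : ArithmeticFunction ℕ :=
  (ArithmeticFunction.id.pmul totientArith) * totientArith

lemma totientConvolution_apply (n : ℕ) :
    totientConvolution n = ∑ d ∈ n.divisors, d * d.totient * (n / d).totient := by
  rw [totientConvolution, ArithmeticFunction.mul_apply,
    Nat.sum_divisorsAntidiagonal (f := fun a b =>
      (ArithmeticFunction.id.pmul totientArith) a * totientArith b)]
  rfl

lemma isMultiplicative_totientConvolution : totientConvolution.IsMultiplicative := by
  have h : totientArith.IsMultiplicative := ⟨rfl, fun h => Nat.totient_mul h⟩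
  exact (ArithmeticFunction.isMultiplicative_id.pmul h).mul h

lemma convolution_prime_pow {p : ℕ} (hp : p.Prime) (k : ℕ) :
    (totientConvolution (p ^ (k + 1)) : ℚ) = (p : ℚ) ^ (2 * k) * ((p : ℚ) ^ 2 - 1) := by
  have hφ (m : ℕ) : ((p ^ (m + 1)).totient : ℚ) = (p : ℚ) ^ m * ((p : ℚ) - 1) := by
    rw [Nat.totient_prime_pow_succ hp, Nat.cast_mul, Nat.cast_pow, Nat.cast_pred hp.pos]
  have hmid : ∀ j ∈ Finset.range k,
      ((p ^ (j + 1) * (p ^ (j + 1)).totient * (p ^ (k + 1) / p ^ (j + 1)).totient : ℕ) : ℚ)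
        = (p : ℚ) ^ k * ((p : ℚ) - 1) * ((p : ℚ) ^ j * ((p : ℚ) - 1)) := by
    intro j hj
    obtain ⟨c, rfl⟩ := Nat.exists_eq_add_of_lt (Finset.mem_range.mp hj)
    rw [Nat.pow_div (by omega) hp.pos, show j + c + 1 + 1 - (j + 1) = c + 1 by omega]
    push_cast
    rw [hφ, hφ]
    ring
  rw [totientConvolution_apply, Nat.sum_divisors_prime_pow hp, Nat.cast_sum,
    Finset.sum_range_succ, Finset.sum_range_succ', Finset.sum_congr rfl hmid,
    ← Finset.mul_sum, ← Finset.sum_mul, geom_sum_mul, Nat.div_self (pow_pos hp.pos _),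
    pow_zero, Nat.div_one, Nat.totient_one]
  push_cast
  rw [hφ]
  ring

/-- For every positive integer `n`, the identity
`∑_{d ∣ n} d·φ(d)·φ(n/d) = n² · ∏_{p ∣ n, p prime} (1 − 1/p²)`
holds in the rational numbers, where the product ranges over the
distinct prime divisors of `n`. -/
theorem divisor_totient_sum_eq_sq_mul_prod (n : ℕ) (hn : 0 < n) :
    ((∑ d ∈ n.divisors, d * d.totient * (n / d).totient : ℕ) : ℚ) =
      (n : ℚ) ^ 2 * ∏ p ∈ n.primeFactors, (1 - 1 / (p : ℚ) ^ 2) := by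
  rw [← totientConvolution_apply]
  induction n using Nat.recOnPosPrimePosCoprime with
  | zero => exact absurd hn (lt_irrefl 0)
  | one => simp [isMultiplicative_totientConvolution.map_one]
  | prime_pow p m hp hm =>
    obtain ⟨k, rfl⟩ := Nat.exists_eq_succ_of_ne_zero hm.ne'
    have hp0 : (p : ℚ) ≠ 0 := Nat.cast_ne_zero.mpr hp.ne_zero
    rw [Nat.succ_eq_add_one, convolution_prime_pow hp,
      Nat.primeFactors_prime_pow k.succ_ne_zero hp, Finset.prod_singleton]
    push_cast
    field_simp
    ring
  | coprime a b ha hb hab iha ihb =>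
    rw [isMultiplicative_totientConvolution.map_mul_of_coprime hab, Nat.cast_mul,
      iha (by omega), ihb (by omega), hab.primeFactors_mul,
      Finset.prod_union hab.disjoint_primeFactors]
    push_cast
    ring
end

section
/- If a positive integer n has a prime factor p with p > 23, then ∑_{d ∣ n} d·φ(d)·φ(n/d) > 12 · ∑_{d ∣ n} φ(d)·φ(n/d); in particular the equation f(n) = 12·g(n) has no solutions n with a prime factor exceeding 23. -/
/-!
The weight `φ(d)·φ(n/d)` is invariant under the involution `d ↦ n/d` of the divisors of `n`, so
`2·f(n) = ∑ (d + n/d)·φ(d)·φ(n/d)`. Since `p` divides `n = d·(n/d)`, it divides one of the two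
factors, hence `d + n/d ≥ p + 1 > 24` for every divisor `d`. As all weights are positive, comparing
termwise gives `2·f(n) > 24·g(n)`.
-/

/-- If a positive integer `n` has a prime factor `p` with `p > 23`, then
`∑_{d ∣ n} d·φ(d)·φ(n/d) > 12 · ∑_{d ∣ n} φ(d)·φ(n/d)`; in particular the
equation `f(n) = 12·g(n)` has no solutions `n` with a prime factor
exceeding `23`. -/
theorem divisor_totient_sum_gt_of_large_prime_factor (n : ℕ) (hn : 0 < n)
    (p : ℕ) (hp : p.Prime) (hpn : p ∣ n) (hp23 : 23 < p) :
    (∑ d ∈ n.divisors, d * d.totient * (n / d).totient) >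
      12 * ∑ d ∈ n.divisors, d.totient * (n / d).totient := by
  have hsymm : ∑ d ∈ n.divisors, (n / d) * d.totient * (n / d).totient =
      ∑ d ∈ n.divisors, d * d.totient * (n / d).totient := by
    rw [← Nat.sum_div_divisors n (fun d => d * d.totient * (n / d).totient)]
    refine Finset.sum_congr rfl fun d hd => ?_
    rw [Nat.div_div_self (Nat.dvd_of_mem_divisors hd) hn.ne']
    ring
  have hlt : ∑ d ∈ n.divisors, 24 * (d.totient * (n / d).totient) <
      ∑ d ∈ n.divisors, (d * d.totient * (n / d).totient +
        (n / d) * d.totient * (n / d).totient) := by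
    refine Finset.sum_lt_sum_of_nonempty ⟨1, Nat.one_mem_divisors.mpr hn.ne'⟩ fun d hd => ?_
    have hdn := Nat.dvd_of_mem_divisors hd
    have hd0 : 0 < d := Nat.pos_of_dvd_of_pos hdn hn
    have he0 : 0 < n / d := Nat.div_pos (Nat.le_of_dvd hn hdn) hd0
    have hsum : 24 < d + n / d := by
      rw [← Nat.mul_div_cancel' hdn] at hpn
      rcases hp.dvd_mul.mp hpn with h | h
      · have := Nat.le_of_dvd hd0 h
        omega
      · have := Nat.le_of_dvd he0 h
        omega
    have hw : 0 < d.totient * (n / d).totient :=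
      Nat.mul_pos (Nat.totient_pos.mpr hd0) (Nat.totient_pos.mpr he0)
    calc 24 * (d.totient * (n / d).totient)
        < (d + n / d) * (d.totient * (n / d).totient) := Nat.mul_lt_mul_of_pos_right hsum hw
      _ = _ := by ring
  rw [Finset.sum_add_distrib, hsymm, ← Finset.mul_sum] at hlt
  omega
end

section
/- For every integer n ≥ 5, the equality ∑_{d ∣ n} d·φ(d)·φ(n/d) = 6 · ∑_{d ∣ n} φ(d)·φ(n/d) holds if and only if n ∈ {11, 14, 15}. -/
/-!
The equality bounds `n`. Since `φ(d) φ(n/d) ≤ φ(n)` for each `d ∣ n`, the right-hand sum is at most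
`τ(n) φ(n)`, where `τ` counts divisors, while the term `d = n` alone makes the left-hand sum at
least `n φ(n)`. Hence equality forces `n ≤ 6 τ(n)`. As one of `d`, `n / d` is at most `√n`, also
`τ(n) ≤ 2 √n`, so `n ≤ 12 √n` and `n ≤ 144`. The remaining values are evaluated.
-/

theorem card_divisors_le_two_mul_sqrt (n : ℕ) : n.divisors.card ≤ 2 * n.sqrt := by
  have hsub : n.divisors ⊆ Finset.Icc 1 n.sqrt ∪ (Finset.Icc 1 n.sqrt).image (n / ·) := by
    intro d hd
    obtain ⟨⟨e, rfl⟩, hn⟩ := Nat.mem_divisors.mp hd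
    have hd0 : 0 < d := Nat.pos_of_ne_zero (left_ne_zero_of_mul hn)
    have he0 : 0 < e := Nat.pos_of_ne_zero (right_ne_zero_of_mul hn)
    rw [Finset.mem_union, Finset.mem_image]
    rcases le_total d e with h | h
    · exact Or.inl (Finset.mem_Icc.mpr ⟨hd0, Nat.le_sqrt.mpr (Nat.mul_le_mul_left d h)⟩)
    · exact Or.inr ⟨e, Finset.mem_Icc.mpr ⟨he0, Nat.le_sqrt.mpr (Nat.mul_le_mul_right e h)⟩,
        Nat.mul_div_cancel d he0⟩
  calc n.divisors.card
      ≤ (Finset.Icc 1 n.sqrt ∪ (Finset.Icc 1 n.sqrt).image (n / ·)).card :=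
        Finset.card_le_card hsub
    _ ≤ (Finset.Icc 1 n.sqrt).card + ((Finset.Icc 1 n.sqrt).image (n / ·)).card :=
        Finset.card_union_le _ _
    _ ≤ (Finset.Icc 1 n.sqrt).card + (Finset.Icc 1 n.sqrt).card :=
        Nat.add_le_add_left Finset.card_image_le _
    _ = 2 * n.sqrt := by rw [Nat.card_Icc]; omega

theorem sum_totient_mul_totient_le (n : ℕ) :
    ∑ d ∈ n.divisors, d.totient * (n / d).totient ≤ n.divisors.card * n.totient := by
  rw [← smul_eq_mul]
  refine Finset.sum_le_card_nsmul _ _ _ fun d hd => ?_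
  calc d.totient * (n / d).totient ≤ (d * (n / d)).totient :=
        Nat.totient_super_multiplicative d (n / d)
    _ = n.totient := by rw [Nat.mul_div_cancel' (Nat.dvd_of_mem_divisors hd)]

/-- The single term `d = n` already bounds the weighted sum from below. -/
theorem mul_totient_le_sum (n : ℕ) (hn : 0 < n) :
    n * n.totient ≤ ∑ d ∈ n.divisors, d * d.totient * (n / d).totient := by
  have h := Finset.single_le_sum (f := fun d => d * d.totient * (n / d).totient)
    (fun d _ => Nat.zero_le _) (Nat.mem_divisors_self n hn.ne')
  simpa [Nat.div_self hn] using h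

theorem lt_of_sum_eq (n : ℕ) (hn : 0 < n)
    (h : (∑ d ∈ n.divisors, d * d.totient * (n / d).totient) =
      6 * ∑ d ∈ n.divisors, d.totient * (n / d).totient) : n < 145 := by
  have hphi : 0 < n.totient := Nat.totient_pos.mpr hn
  have h6 : n ≤ 6 * n.divisors.card := by
    refine Nat.le_of_mul_le_mul_right ?_ hphi
    have h1 := mul_totient_le_sum n hn
    have h2 := sum_totient_mul_totient_le n
    rw [mul_assoc]
    omega
  have hs : n ≤ 12 * n.sqrt := by
    have := card_divisors_le_two_mul_sqrt n
    omega
  have hsq : n.sqrt * n.sqrt ≤ n := Nat.sqrt_le n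
  have hs0 : 0 < n.sqrt := Nat.sqrt_pos.mpr hn
  -- `√n * √n ≤ 12 √n` gives `√n ≤ 12`, hence `n ≤ 144`.
  have : n.sqrt ≤ 12 := Nat.le_of_mul_le_mul_right (hsq.trans hs) hs0
  omega

theorem iff_of_lt : ∀ n < 145, 5 ≤ n →
    ((∑ d ∈ n.divisors, d * d.totient * (n / d).totient) =
        6 * ∑ d ∈ n.divisors, d.totient * (n / d).totient ↔
      n ∈ ({11, 14, 15} : Finset ℕ)) := by
  decide +kernel

/-- For every integer `n ≥ 5`, the equality
`∑_{d ∣ n} d·φ(d)·φ(n/d) = 6 · ∑_{d ∣ n} φ(d)·φ(n/d)` holds if and only if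
`n ∈ {11, 14, 15}`. -/
theorem divisor_totient_sum_eq_six_mul_iff (n : ℕ) (hn : 5 ≤ n) :
    (∑ d ∈ n.divisors, d * d.totient * (n / d).totient) =
        6 * ∑ d ∈ n.divisors, d.totient * (n / d).totient ↔
      n ∈ ({11, 14, 15} : Finset ℕ) := by
  by_cases hlt : n < 145
  · exact iff_of_lt n hlt hn
  · refine ⟨fun h => absurd (lt_of_sum_eq n (by omega) h) hlt, fun h => ?_⟩
    simp only [Finset.mem_insert, Finset.mem_singleton] at h
    omega
end

section
/- For every integer n ≥ 5, the equality ∑_{d ∣ n} d·φ(d)·φ(n/d) + 24 = 6 · ∑_{d ∣ n} φ(d)·φ(n/d) holds if and only if n ∈ {5, 6, 7, 8, 9, 10, 12}. -/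
/-!
The equation says `∑_{d ∣ n} (d - 6) φ(d) φ(n/d) = -24`. Only the divisors `d ≤ 5` contribute
negatively, and since `φ(d) φ(n/d) ≤ φ(n)`, their contribution is at least
`-(5 + 4 + 3 + 2 + 1) φ(n) = -15 φ(n)`. The divisor `d = n` alone contributes `(n - 6) φ(n)`, so
for `n ≥ 21` the sum is nonnegative and the equation fails (`six_mul_sum_le`). The cases
`5 ≤ n ≤ 20` are decided by computation.
-/

/-- The truncated subtraction `6 - d` discards the divisors `d ≥ 6`; the divisors `1, …, 5`
contribute at most `5 + 4 + 3 + 2 + 1`. -/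
lemma sum_properDivisors_six_sub_le (n : ℕ) : ∑ d ∈ n.properDivisors, (6 - d) ≤ 15 := by
  calc ∑ d ∈ n.properDivisors, (6 - d)
      = ∑ d ∈ n.properDivisors with d < 6, (6 - d) := by
        refine (Finset.sum_filter_of_ne fun d _ h => ?_).symm
        omega
    _ ≤ ∑ d ∈ Finset.Icc 1 5, (6 - d) := by
        refine Finset.sum_le_sum_of_subset fun d hd => ?_
        rw [Finset.mem_filter] at hd
        have := Nat.pos_of_mem_properDivisors hd.1
        rw [Finset.mem_Icc]
        omega
    _ = 15 := by decide

lemma six_mul_sum_le (n : ℕ) (hn : 21 ≤ n) :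
    6 * ∑ d ∈ n.divisors, d.totient * (n / d).totient ≤
      ∑ d ∈ n.divisors, d * d.totient * (n / d).totient := by
  have hn0 : n ≠ 0 := by omega
  have hterm : ∀ d ∈ n.properDivisors, 6 * (d.totient * (n / d).totient) ≤
      d * d.totient * (n / d).totient + (6 - d) * n.totient := by
    intro d hd
    have h : d.totient * (n / d).totient ≤ n.totient := by
      have := Nat.totient_super_multiplicative d (n / d)
      rwa [Nat.mul_div_cancel' (Nat.mem_properDivisors.1 hd).1] at this
    calc 6 * (d.totient * (n / d).totient)
        ≤ (d + (6 - d)) * (d.totient * (n / d).totient) := by gcongr; omega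
      _ = d * d.totient * (n / d).totient + (6 - d) * (d.totient * (n / d).totient) := by ring
      _ ≤ _ := by gcongr
  have hsum := Finset.sum_le_sum hterm
  rw [← Finset.mul_sum, Finset.sum_add_distrib, ← Finset.sum_mul] at hsum
  have h15 := Nat.mul_le_mul_right n.totient (sum_properDivisors_six_sub_le n)
  have hself := Nat.mul_le_mul_right n.totient hn
  rw [← Nat.insert_self_properDivisors hn0, Finset.sum_insert Nat.self_notMem_properDivisors,
    Finset.sum_insert Nat.self_notMem_properDivisors, Nat.div_self (by omega), Nat.totient_one,
    mul_one, mul_one]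
  linarith

/-- For every integer `n ≥ 5`, the equality
`∑_{d ∣ n} d·φ(d)·φ(n/d) + 24 = 6 · ∑_{d ∣ n} φ(d)·φ(n/d)` holds if and only
if `n ∈ {5, 6, 7, 8, 9, 10, 12}`. -/
theorem divisor_totient_sum_add_24_eq_six_mul_iff (n : ℕ) (hn : 5 ≤ n) :
    (∑ d ∈ n.divisors, d * d.totient * (n / d).totient) + 24 =
        6 * ∑ d ∈ n.divisors, d.totient * (n / d).totient ↔
      n ∈ ({5, 6, 7, 8, 9, 10, 12} : Finset ℕ) := by
  rcases Nat.lt_or_ge n 21 with h | h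
  · interval_cases n <;> decide +kernel
  · have hle := six_mul_sum_le n h
    constructor
    · intro heq
      omega
    · intro hmem
      simp only [Finset.mem_insert, Finset.mem_singleton] at hmem
      omega
end

section
/- Let n be a positive integer, let Γ be a subgroup of SL₂(ℤ) containing the principal congruence subgroup Γ(n), and let k be a negative integer. Then every modular form of weight k for Γ is identically zero; that is, there are no nonzero modular forms of negative weight for any congruence subgroup of SL₂(ℤ). -/
/-- Let `n` be a positive integer, let `Γ` be a subgroup of `SL₂(ℤ)`
containing the principal congruence subgroup `Γ(n)`, and let `k` be a negative
integer. Then every modular form of weight `k` for `Γ` is identically zero. -/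
theorem modularForm_neg_weight_eq_zero (n : ℕ) (hn : 0 < n)
    (Γ : Subgroup (Matrix.SpecialLinearGroup (Fin 2) ℤ))
    (hΓ : CongruenceSubgroup.Gamma n ≤ Γ) (k : ℤ) (hk : k < 0)
    (f : ModularForm Γ k) : f = 0 := by
  have : NeZero n := ⟨hn.ne'⟩
  -- `Γ(n)` has finite index in `SL₂(ℤ)`, hence so does `Γ`, making its image in `GL₂(ℝ)` arithmetic.
  have : Γ.FiniteIndex := Subgroup.finiteIndex_of_le hΓ
  -- The norm of `f` to level one, a product over the cosets of `Γ` in `SL₂(ℤ)`, again has negative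
  -- weight; it vanishes since no nonzero level-one form has negative weight, and so `f` vanishes.
  exact ModularForm.isZero_of_neg_weight hk f
end
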